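/- In the setting below, let δ ∈ (0, ν) and let C be a maximal chain of X_δ with x in the closure of C. Then ∂(⋃_{q∈C} Ŝ_q) ∩ B_ν(x) ⊆ W^s_ε(x), where ∂ denotes the topological frontier in M. -/

import Mathlib

open Metric Set

variable {M : Type*} [MetricSpace M]

/-- Iterates of a homeomorphism, indexed by `ℤ`. -/
def iterZ (f : M ≃ₜ M) (k : ℤ) (x : M) : M := (f.toEquiv ^ k) x

/-- `f` is expansive with expansivity constant `α`. -/
def IsExpansive (f : M ≃ₜ M) (α : ℝ) : Prop :=
  ∀ x y : M, x ≠ y → ∃ k : ℤ, α < dist (iterZ f k x) (iterZ f k y)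

/-- Stable set of `x`. -/
def Ws (f : M ≃ₜ M) (x : M) : Set M :=
  {y | Filter.Tendsto (fun k : ℤ => dist (iterZ f k x) (iterZ f k y)) Filter.atTop (nhds 0)}

/-- Unstable set of `x`. -/
def Wu (f : M ≃ₜ M) (x : M) : Set M :=
  {y | Filter.Tendsto (fun k : ℤ => dist (iterZ f k x) (iterZ f k y)) Filter.atBot (nhds 0)}

/-- Local (`ε`-local) stable set of `x`. -/
def WsLoc (f : M ≃ₜ M) (ε : ℝ) (x : M) : Set M :=
  {y | ∀ k : ℤ, 0 ≤ k → dist (iterZ f k x) (iterZ f k y) ≤ ε}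

/-- Local (`ε`-local) unstable set of `x`. -/
def WuLoc (f : M ≃ₜ M) (ε : ℝ) (x : M) : Set M :=
  {y | ∀ k : ℤ, k ≤ 0 → dist (iterZ f k x) (iterZ f k y) ≤ ε}

/-- The model space `ℝ^r × ℝ^{n-r}`. -/
abbrev ModelSp (n r : ℕ) := (Fin r → ℝ) × (Fin (n - r) → ℝ)

/-- The model hyperbolic linear map `L(a,b) = (a/2, 2b)`. -/
noncomputable def modelL (n r : ℕ) : ModelSp n r → ModelSp n r :=
  fun q => (fun i => q.1 i / 2, fun i => 2 * q.2 i)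

/-- Topologically hyperbolic periodic points of index `r` (`Per_H^r`). -/
def PerHr (f : M ≃ₜ M) (n r : ℕ) : Set M :=
  {p | ∃ l : ℕ, 1 ≤ l ∧ (f.toEquiv ^ l) p = p ∧
    ∃ (U : Set M) (V : Set (ModelSp n r)) (h : U ≃ₜ V),
      IsOpen U ∧ IsOpen V ∧ (0 : ModelSp n r) ∈ V ∧
      ∃ hp : p ∈ U, ((h ⟨p, hp⟩ : V) : ModelSp n r) = 0 ∧
        ∀ z : M, ∀ hz : z ∈ U, ∀ hz' : (f.toEquiv ^ l) z ∈ U,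
          ((h ⟨(f.toEquiv ^ l) z, hz'⟩ : V) : ModelSp n r) = modelL n r (h ⟨z, hz⟩)}

/-- All topologically hyperbolic periodic points (`Per_H`). -/
def PerH (f : M ≃ₜ M) (n : ℕ) : Set M := ⋃ r ∈ Finset.range (n + 1), PerHr f n r

/-- `p` admits a local product structure. -/
def AdmitsLPS (f : M ≃ₜ M) (n : ℕ) (p : M) : Prop :=
  ∃ (k : ℕ) (h : (Fin k → ℝ) × (Fin (n - k) → ℝ) → M) (ε : ℝ),
    0 < ε ∧ Topology.IsEmbedding h ∧ p ∈ Set.range h ∧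
    ∀ x : Fin k → ℝ, ∀ y : Fin (n - k) → ℝ,
      h '' ({x} ×ˢ univ) = WsLoc f ε (h (x, y)) ∩ Set.range h ∧
      h '' (univ ×ˢ {y}) = WuLoc f ε (h (x, y)) ∩ Set.range h

/-- `D` has exactly two connected components, namely `V₁` and `V₂`. -/
def TwoComponents {M : Type*} [TopologicalSpace M] (D V₁ V₂ : Set M) : Prop :=
  V₁ ≠ V₂ ∧
  (∀ y ∈ D, connectedComponentIn D y = V₁ ∨ connectedComponentIn D y = V₂) ∧
  (∃ y ∈ D, connectedComponentIn D y = V₁) ∧ (∃ y ∈ D, connectedComponentIn D y = V₂)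

variable {M : Type*} [MetricSpace M]

/-- `S_p = cc_p(W^s(p) ∩ B_ν(x))`. -/
def SpSet (f : M ≃ₜ M) (x : M) (ν : ℝ) (p : M) : Set M :=
  connectedComponentIn (Ws f p ∩ Metric.ball x ν) p

/-- `U_p = cc_p(W^u(p) ∩ B_ν(x))`. -/
def UpSet (f : M ≃ₜ M) (x : M) (ν : ℝ) (p : M) : Set M :=
  connectedComponentIn (Wu f p ∩ Metric.ball x ν) p

/-- `Ŝ_p = B_ν(x) \ cc_x(B_ν(x) \ S_p)`. -/
def ShatSet (f : M ≃ₜ M) (x : M) (ν : ℝ) (p : M) : Set M :=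
  Metric.ball x ν \ connectedComponentIn (Metric.ball x ν \ SpSet f x ν p) x

/-- `X_δ = Per_H^{n-1} ∩ B_δ(x)`. -/
def Xdelta (f : M ≃ₜ M) (n : ℕ) (x : M) (δ : ℝ) : Set M :=
  PerHr f n (n - 1) ∩ Metric.ball x δ

/-- `C` is a chain of `(X_δ, ≤)`, where `p ≤ q ↔ Ŝ_p ⊆ Ŝ_q`. -/
def IsChainIn (f : M ≃ₜ M) (n : ℕ) (x : M) (ν δ : ℝ) (C : Set M) : Prop :=
  C ⊆ Xdelta f n x δ ∧
  ∀ p ∈ C, ∀ q ∈ C, ShatSet f x ν p ⊆ ShatSet f x ν q ∨ ShatSet f x ν q ⊆ ShatSet f x ν p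

/-- `C` is a maximal chain of `(X_δ, ≤)`. -/
def IsMaxChainIn (f : M ≃ₜ M) (n : ℕ) (x : M) (ν δ : ℝ) (C : Set M) : Prop :=
  IsChainIn f n x ν δ C ∧ ∀ C' : Set M, IsChainIn f n x ν δ C' → C ⊆ C' → C' = C

theorem iterZ_cont {M : Type*} [MetricSpace M] (f : M ≃ₜ M) (k : ℤ) :
    Continuous (iterZ f k) := by
  have hn : ∀ n : ℕ, Continuous (fun x => (f.toEquiv ^ n) x) := by
    intro n
    induction n with
    | zero => exact continuous_id
    | succ n ih =>
      have : (fun x => (f.toEquiv ^ (n + 1)) x) = fun x => (f.toEquiv ^ n) (f x) := by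
        funext x
        rw [pow_succ]; rfl
      rw [this]
      exact ih.comp f.continuous
  have hn' : ∀ n : ℕ, Continuous (fun x => ((f.toEquiv)⁻¹ ^ n) x) := by
    intro n
    induction n with
    | zero => exact continuous_id
    | succ n ih =>
      have : (fun x => ((f.toEquiv)⁻¹ ^ (n + 1)) x)
          = fun x => ((f.toEquiv)⁻¹ ^ n) (f.symm x) := by
        funext x
        rw [pow_succ]; rfl
      rw [this]
      exact ih.comp f.symm.continuous
  obtain ⟨n, rfl | rfl⟩ := k.eq_nat_or_neg
  · have : iterZ f n = fun x => (f.toEquiv ^ n) x := by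
      funext x; simp [iterZ]
    rw [this]; exact hn n
  · have : iterZ f (-(n : ℤ)) = fun x => ((f.toEquiv)⁻¹ ^ n) x := by
      funext x; simp [iterZ]
    rw [this]; exact hn' n

theorem iterZ_add' {M : Type*} [MetricSpace M] (f : M ≃ₜ M) (m k : ℤ) (x : M) :
    iterZ f (m + k) x = iterZ f m (iterZ f k x) := by
  simp only [iterZ, zpow_add, Equiv.Perm.mul_apply]

theorem WsLoc_closed {M : Type*} [MetricSpace M] (f : M ≃ₜ M) (ε : ℝ) (p : M) :
    IsClosed (WsLoc f ε p) := by
  have : WsLoc f ε p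
      = ⋂ k : ℤ, ⋂ _ : 0 ≤ k, {y | dist (iterZ f k p) (iterZ f k y) ≤ ε} := by
    ext y; simp [WsLoc]
  rw [this]
  refine isClosed_iInter fun k => isClosed_iInter fun _ => ?_
  exact isClosed_le (continuous_const.dist (iterZ_cont f k)) continuous_const

theorem WsLoc_sub_Ws {M : Type*} [MetricSpace M] [CompactSpace M] (f : M ≃ₜ M) (α ε : ℝ)
    (hexp : IsExpansive f α) (h : ε < α) (p : M) : WsLoc f ε p ⊆ Ws f p := by
  intro y hy
  by_contra hnot
  have hnot' : ¬ Filter.Tendsto (fun k : ℤ => dist (iterZ f k p) (iterZ f k y))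
      Filter.atTop (nhds 0) := hnot
  obtain ⟨U, hU, hUn⟩ : ∃ U : Ultrafilter ℤ, (U : Filter ℤ) ≤ Filter.atTop ∧
      ¬ Filter.Tendsto (fun k : ℤ => dist (iterZ f k p) (iterZ f k y)) U (nhds 0) := by
    by_contra hc
    push Not at hc
    exact hnot' (Filter.tendsto_iff_ultrafilter _ _ _ |>.2 hc)
  have lim : ∀ q : M, ∃ a, Filter.Tendsto (fun k : ℤ => iterZ f k q) U (nhds a) := by
    intro q
    obtain ⟨a, -, ha⟩ := (isCompact_univ (X := M)).ultrafilter_le_nhds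
      (U.map (fun k : ℤ => iterZ f k q)) (by simp)
    exact ⟨a, ha⟩
  obtain ⟨a, ha⟩ := lim p
  obtain ⟨b, hb⟩ := lim y
  have hab : a ≠ b := by
    rintro rfl
    apply hUn
    simpa using ha.dist hb
  obtain ⟨m, hm⟩ := hexp a b hab
  have h1 := (((iterZ_cont f m).tendsto a).comp ha).dist (((iterZ_cont f m).tendsto b).comp hb)
  have : dist (iterZ f m a) (iterZ f m b) ≤ ε := by
    refine le_of_tendsto h1 ?_
    filter_upwards [hU (Filter.eventually_ge_atTop (-m))] with k hk
    have := hy (m + k) (by have : -m ≤ k := hk; omega)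
    simpa [iterZ_add'] using this
  linarith

/-- **Lemma.** The frontier of the union of the umbrellas `Ŝ_q` over a maximal chain
accumulating at `x`, intersected with `B_ν(x)`, lies in `W^s_ε(x)`. -/
theorem stmt12
    {M : Type*} [MetricSpace M] [CompactSpace M] [ConnectedSpace M]
    (n : ℕ) [ChartedSpace (EuclideanSpace ℝ (Fin n)) M]
    (f : M ≃ₜ M) (α : ℝ) (hα : 0 < α) (hexp : IsExpansive f α)
    (x : M) (hx : ¬ AdmitsLPS f n x)
    (ε : ℝ) (hε : 0 < ε) (hεα : 2 * ε < α) (ν : ℝ) (hν : 0 < ν)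
    (hi : ∀ p ∈ PerH f n ∩ Metric.ball x ν,
      SpSet f x ν p ⊆ WsLoc f ε p ∧ UpSet f x ν p ⊆ WuLoc f ε p)
    (hii : ∀ p ∈ PerHr f n (n - 1) ∩ Metric.ball x ν,
      ∃ V₁ V₂ : Set M, TwoComponents (Metric.ball x ν \ SpSet f x ν p) V₁ V₂)
    (δ : ℝ) (hδ : δ ∈ Set.Ioo (0 : ℝ) ν)
    (C : Set M) (hC : IsMaxChainIn f n x ν δ C) (hxC : x ∈ closure C) :
    frontier (⋃ q ∈ C, ShatSet f x ν q) ∩ Metric.ball x ν ⊆ WsLoc f ε x := by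
  have : LocallyConnectedSpace M :=
    ChartedSpace.locallyConnectedSpace (EuclideanSpace ℝ (Fin n)) M
  rintro z ⟨hz, hzν⟩
  have hCν : ∀ q ∈ C, q ∈ PerHr f n (n - 1) ∩ Metric.ball x ν := fun q hq =>
    ⟨(hC.1.1 hq).1, Metric.ball_subset_ball hδ.2.le (hC.1.1 hq).2⟩
  have hloc : ∀ q ∈ C, SpSet f x ν q ⊆ WsLoc f ε q := by
    intro q hq
    refine (hi q ⟨?_, (hCν q hq).2⟩).1
    exact Set.mem_biUnion (Finset.mem_coe.2 (Finset.mem_range.2 (by omega))) (hCν q hq).1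
  have hqWs : ∀ q ∈ C, q ∈ Ws f q ∩ Metric.ball x ν := by
    intro q hq
    exact ⟨by simp [Ws], (hCν q hq).2⟩
  have hself : ∀ q ∈ C, q ∈ SpSet f x ν q := fun q hq =>
    mem_connectedComponentIn (hqWs q hq)
  -- the plaque is closed in the ball
  have hclos : ∀ q ∈ C, closure (SpSet f x ν q) ∩ Metric.ball x ν ⊆ SpSet f x ν q := by
    intro q hq
    have hsub : closure (SpSet f x ν q) ⊆ Ws f q :=
      (closure_minimal (hloc q hq) (WsLoc_closed f ε q)).trans
        (WsLoc_sub_Ws f α ε hexp (by linarith) q)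
    have hpre : IsPreconnected (SpSet f x ν q) := isPreconnected_connectedComponentIn
    have hss : SpSet f x ν q ⊆ closure (SpSet f x ν q) ∩ Metric.ball x ν := fun y hy =>
      ⟨subset_closure hy, (connectedComponentIn_subset _ _ hy).2⟩
    exact (hpre.subset_closure hss inter_subset_left).subset_connectedComponentIn
      (hss (hself q hq)) (fun y hy => ⟨hsub hy.1, hy.2⟩)
  have hopen : ∀ q ∈ C, IsOpen (Metric.ball x ν \ SpSet f x ν q) := by
    intro q hq
    have : Metric.ball x ν \ SpSet f x ν q = Metric.ball x ν \ closure (SpSet f x ν q) := by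
      ext y
      constructor
      · rintro ⟨h1, h2⟩
        exact ⟨h1, fun h3 => h2 (hclos q hq ⟨h3, h1⟩)⟩
      · rintro ⟨h1, h2⟩
        exact ⟨h1, fun h3 => h2 (subset_closure h3)⟩
    rw [this]
    exact Metric.isOpen_ball.sdiff isClosed_closure
  have hShat : ∀ q ∈ C, q ∈ ShatSet f x ν q := fun q hq =>
    ⟨(hCν q hq).2, fun h => (connectedComponentIn_subset _ _ h).2 (hself q hq)⟩
  have hxS : ∀ q ∈ C, x ∉ SpSet f x ν q := by
    intro q hq hxq
    have hall : ShatSet f x ν q = Metric.ball x ν := by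
      unfold ShatSet
      rw [connectedComponentIn_eq_empty (fun h => h.2 hxq), diff_empty]
    have hint : z ∈ interior (⋃ q ∈ C, ShatSet f x ν q) := by
      refine mem_interior.2 ⟨Metric.ball x ν, ?_, Metric.isOpen_ball, hzν⟩
      intro y hy
      exact Set.mem_biUnion hq (hall ▸ hy)
    exact hz.2 hint
  -- key approximation
  have key : ∀ N ∈ nhds z, ∀ W ∈ nhds x, ∃ q ∈ W, ∃ y ∈ N, y ∈ WsLoc f ε q := by
    intro N hN W hW
    obtain ⟨N', ⟨hN'o, hzN', hN'c⟩, hN's⟩ :=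
      (LocallyConnectedSpace.open_connected_basis z).mem_iff.1
        (Filter.inter_mem hN (Metric.isOpen_ball.mem_nhds hzν))
    simp only [id] at hN's
    obtain ⟨u, huN, hu⟩ := mem_closure_iff.1 hz.1 N' hN'o hzN'
    obtain ⟨q₀, hq₀, hu⟩ := Set.mem_iUnion₂.1 hu
    obtain ⟨v, hvN, hv⟩ : ∃ v ∈ N', v ∉ ⋃ q ∈ C, ShatSet f x ν q := by
      by_contra hc
      push Not at hc
      exact hz.2 (mem_interior.2 ⟨N', hc, hN'o, hzN'⟩)
    have hO : connectedComponentIn (Metric.ball x ν \ SpSet f x ν q₀) x ∈ nhds x :=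
      ((hopen q₀ hq₀).connectedComponentIn).mem_nhds
        (mem_connectedComponentIn ⟨Metric.mem_ball_self hν, hxS q₀ hq₀⟩)
    obtain ⟨q, ⟨hqW, hqO⟩, hq⟩ := mem_closure_iff_nhds.1 hxC _ (Filter.inter_mem hW hO)
    have hle : ShatSet f x ν q₀ ⊆ ShatSet f x ν q := by
      rcases hC.1.2 q₀ hq₀ q hq with h | h
      · exact h
      · exact absurd hqO (h (hShat q hq)).2
    refine ⟨q, hqW, ?_⟩
    by_contra hc
    push Not at hc
    have hNd : N' ⊆ Metric.ball x ν \ SpSet f x ν q := fun y hy =>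
      ⟨(hN's hy).2, fun h => hc y (hN's hy).1 (hloc q hq h)⟩
    have hvx : v ∈ connectedComponentIn (Metric.ball x ν \ SpSet f x ν q) x := by
      by_contra h
      exact hv (Set.mem_biUnion hq ⟨(hN's hvN).2, h⟩)
    have huv := hN'c.isPreconnected.subset_connectedComponentIn hvN hNd huN
    rw [← connectedComponentIn_eq hvx] at huv
    exact (hle hu).2 huv
  intro k hk
  by_contra hlt
  push Not at hlt
  have hcont : Continuous fun w : M × M => dist (iterZ f k w.1) (iterZ f k w.2) :=
    ((iterZ_cont f k).comp continuous_fst).dist ((iterZ_cont f k).comp continuous_snd)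
  have hev : ∀ᶠ w in nhds (x, z), ε < dist (iterZ f k w.1) (iterZ f k w.2) :=
    hcont.continuousAt.eventually (lt_mem_nhds hlt)
  obtain ⟨W, hW, N, hN, hWN⟩ := mem_nhds_prod_iff.1 hev
  obtain ⟨q, hq, y, hy, hqy⟩ := key N hN W hW
  have h1 : ε < dist (iterZ f k q) (iterZ f k y) := hWN (Set.mk_mem_prod hq hy)
  exact absurd (hqy k hk) (not_le.2 h1)
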